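/- For every c ≥ 0, set x_− = (√(c+1) − 1)² and x_+ = (√(c+1) + 1)², and let v(c,y) = √((x_+−y)(y−x_−)) / (2πy) for y ∈ (x_−, x_+), extended by 0 outside. Then for every x ∈ (x_−, x_+), the Hilbert transform of v(c,·) satisfies Hv(c,·)(x) = (x − c)/(2πx). -/

import Mathlib

open MeasureTheory Real Filter Topology Set

/-- Chebyshev polynomial of the first kind, `T_k`, evaluated at a real number. -/
noncomputable def chebT (k : ℕ) (x : ℝ) : ℝ := (Polynomial.Chebyshev.T ℝ k).eval x

/-- Chebyshev polynomial of the second kind, `U_k`, evaluated at a real number. -/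
noncomputable def chebU (k : ℕ) (x : ℝ) : ℝ := (Polynomial.Chebyshev.U ℝ k).eval x

/-- `HasHilbertTransform f x L` means the Hilbert transform
`Hf(x) = (1/π) · p.v. ∫ f(y)/(x−y) dy` exists and equals `L`, the principal value
being the limit as `ε → 0⁺` of the integral over `{y : |x−y| > ε}`. -/
def HasHilbertTransform (f : ℝ → ℝ) (x L : ℝ) : Prop :=
  Tendsto (fun ε : ℝ => (1 / π) * ∫ y in {y : ℝ | ε < |x - y|}, f y / (x - y))
    (𝓝[>] 0) (𝓝 L)

/-- Left edge `x_− = (√(c+1) − 1)²` of the Marchenko–Pastur distribution. -/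
noncomputable def mpXm (c : ℝ) : ℝ := (Real.sqrt (c + 1) - 1) ^ 2

/-- Right edge `x_+ = (√(c+1) + 1)²` of the Marchenko–Pastur distribution. -/
noncomputable def mpXp (c : ℝ) : ℝ := (Real.sqrt (c + 1) + 1) ^ 2

/-- Marchenko–Pastur density `v(c,y) = √((x_+−y)(y−x_−))/(2πy)` on `(x_−, x_+)`,
extended by `0` outside. -/
noncomputable def mpDensity (c : ℝ) (y : ℝ) : ℝ :=
  Set.indicator (Set.Ioo (mpXm c) (mpXp c))
    (fun z => Real.sqrt ((mpXp c - z) * (z - mpXm c)) / (2 * π * z)) y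

/-!
Let `α` be the arcsine density on `(a, b)`, where `0 ≤ a < x < b`, and put
`q y = (b - y) * (y - a)`. On `(a, b)` the density `v y = √(q y) / (2 * π * y)` equals
`q y / (2 * y) * α y`, so polynomial division by `x - y` gives
`v y = q x / (2 * x) * α y + (x - y) * (1 - a * b / (x * y)) / 2 * α y`.
The Hilbert transform of `α` vanishes inside `(a, b)`, and that of the second term is an ordinary
integral, evaluated by `∫ α = 1` and `∫ a * b * α y / y = √(a * b)`. For the Marchenko–Pastur edges,
`√(a * b) = c`.
-/

section FundamentalTheorem

variable {f F : ℝ → ℝ} {a b : ℝ}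

lemma integrable_of_hasDerivAt_of_nonneg (hsupp : Function.support f ⊆ Ioo a b)
    (hcont : ContinuousOn F (Icc a b)) (hderiv : ∀ y ∈ Ioo a b, HasDerivAt F (f y) y)
    (hnonneg : ∀ y ∈ Ioo a b, 0 ≤ f y) : Integrable f :=
  (integrableOn_iff_integrable_of_support_subset (hsupp.trans Ioo_subset_Ioc_self)).1
    (intervalIntegral.integrableOn_deriv_of_nonneg hcont hderiv hnonneg)

lemma integral_eq_sub_of_hasDerivAt_of_support_subset (hab : a ≤ b)
    (hsupp : Function.support f ⊆ Ioo a b) (hcont : ContinuousOn F (Icc a b))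
    (hderiv : ∀ y ∈ Ioo a b, HasDerivAt F (f y) y) (hint : Integrable f) :
    ∫ y, f y = F b - F a := by
  rw [← intervalIntegral.integral_eq_integral_of_support_subset
    (hsupp.trans Ioo_subset_Ioc_self)]
  exact intervalIntegral.integral_eq_sub_of_hasDerivAt_of_le hab hcont hderiv
    hint.intervalIntegrable

end FundamentalTheorem

section HilbertTransform

variable {f : ℝ → ℝ} {a b x ε L : ℝ}

lemma measurableSet_lt_abs_sub (ε x : ℝ) : MeasurableSet {y : ℝ | ε < |x - y|} :=
  measurableSet_lt measurable_const (by fun_prop)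

lemma integrableOn_div_sub_of_lt_abs (hf : Integrable f) (x : ℝ) (hε : 0 < ε) :
    IntegrableOn (fun y ↦ f y / (x - y)) {y | ε < |x - y|} := by
  simp only [div_eq_mul_inv]
  refine Integrable.mul_bdd (c := ε⁻¹) hf.integrableOn (by fun_prop) ?_
  filter_upwards [ae_restrict_mem (measurableSet_lt_abs_sub ε x)] with y hy
  rw [norm_inv, Real.norm_eq_abs]
  exact inv_anti₀ hε (le_of_lt hy)

lemma setIntegral_lt_abs_sub_of_support_subset (hsupp : Function.support f ⊆ Ioo a b) (hε : 0 < ε)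
    (ha : a ≤ x - ε) (hb : x + ε ≤ b) (hint : IntegrableOn f {y | ε < |x - y|}) :
    ∫ y in {y | ε < |x - y|}, f y = (∫ y in a..x - ε, f y) + ∫ y in x + ε..b, f y := by
  have hsub : Ioo a (x - ε) ∪ Ioo (x + ε) b ⊆ {y | ε < |x - y|} := by
    rintro y (hy | hy)
    · exact lt_abs (a := ε).2 (.inl (by linarith [hy.2]))
    · exact lt_abs (a := ε).2 (.inr (by linarith [hy.1]))
  have hzero : ∀ y ∈ {y | ε < |x - y|} \ (Ioo a (x - ε) ∪ Ioo (x + ε) b), f y = 0 := by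
    rintro y ⟨hy, hy'⟩
    by_contra hne
    obtain ⟨hay, hyb⟩ := hsupp hne
    rcases lt_abs.1 (mem_ofPred.1 hy) with h | h
    · exact hy' (.inl ⟨hay, by linarith⟩)
    · exact hy' (.inr ⟨by linarith, hyb⟩)
  have hdisj : Disjoint (Ioo a (x - ε)) (Ioo (x + ε) b) :=
    Set.disjoint_left.2 fun y hy hy' ↦ by linarith [hy.2, hy'.1]
  rw [setIntegral_eq_of_subset_of_forall_sdiff_eq_zero (measurableSet_lt_abs_sub ε x) hsub hzero,
    setIntegral_union hdisj measurableSet_Ioo (hint.mono_set (subset_union_left.trans hsub))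
      (hint.mono_set (subset_union_right.trans hsub)),
    intervalIntegral.integral_of_le ha, intervalIntegral.integral_of_le hb,
    integral_Ioc_eq_integral_Ioo, integral_Ioc_eq_integral_Ioo]

lemma aecover_lt_abs_sub (x : ℝ) : AECover volume (𝓝[>] 0) fun ε : ℝ ↦ {y | ε < |x - y|} where
  ae_eventually_mem := by
    filter_upwards [compl_mem_ae_iff.2 (measure_singleton x)] with y hy
    have hpos : 0 < |x - y| := abs_pos.2 (sub_ne_zero.2 (Ne.symm hy))
    filter_upwards [Ioo_mem_nhdsGT hpos] with ε hε using hε.2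
  measurableSet ε := measurableSet_lt_abs_sub ε x

lemma HasHilbertTransform.const_mul (hf : HasHilbertTransform f x L) (k : ℝ) :
    HasHilbertTransform (fun y ↦ k * f y) x (k * L) := by
  refine (Tendsto.const_mul k hf).congr fun ε ↦ ?_
  simp only [mul_div_assoc, integral_const_mul]
  ring

lemma HasHilbertTransform.add_sub_mul {r : ℝ → ℝ} (hf : HasHilbertTransform f x L)
    (hfint : Integrable f) (hr : Integrable r) :
    HasHilbertTransform (fun y ↦ f y + (x - y) * r y) x (L + 1 / π * ∫ y, r y) := by
  have htrunc := (aecover_lt_abs_sub x).integral_tendsto_of_countably_generated hr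
  refine (Tendsto.add hf (htrunc.const_mul (1 / π))).congr' ?_
  filter_upwards [self_mem_nhdsWithin] with ε (hε : 0 < ε)
  rw [← mul_add, ← integral_add (integrableOn_div_sub_of_lt_abs hfint x hε) hr.integrableOn]
  congr 1
  refine setIntegral_congr_fun (measurableSet_lt_abs_sub ε x) fun y hy ↦ ?_
  have hne : x - y ≠ 0 := abs_pos.1 (hε.trans hy)
  field_simp

end HilbertTransform

section Arcsine

/-- The arcsine density `1 / (π * √((b - y) * (y - a)))` on `(a, b)`. No indicator is needed: for
`a ≤ b`, outside `(a, b)` the square root is `0` and so is its inverse. -/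
noncomputable def arcsineDensity (a b y : ℝ) : ℝ := 1 / (π * √((b - y) * (y - a)))

variable {a b x y : ℝ}

lemma arcsineDensity_nonneg (a b y : ℝ) : 0 ≤ arcsineDensity a b y := by
  unfold arcsineDensity
  positivity

lemma support_arcsineDensity_subset (hab : a ≤ b) :
    Function.support (arcsineDensity a b) ⊆ Ioo a b := by
  intro y hy
  by_contra hmem
  refine hy ?_
  have hnonpos : (b - y) * (y - a) ≤ 0 := by
    rcases not_and_or.1 hmem with h | h
    · exact mul_nonpos_of_nonneg_of_nonpos (by linarith) (by linarith)
    · exact mul_nonpos_of_nonpos_of_nonneg (by linarith) (by linarith)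
  rw [arcsineDensity, Real.sqrt_eq_zero_of_nonpos hnonpos, mul_zero, div_zero]

lemma support_arcsineDensity_div_subset (hab : a ≤ b) (g : ℝ → ℝ) :
    Function.support (fun y ↦ arcsineDensity a b y / g y) ⊆ Ioo a b :=
  (Function.support_div (arcsineDensity a b) g).trans_subset
    (inter_subset_left.trans (support_arcsineDensity_subset hab))

lemma sub_mul_sub_pos (hy : y ∈ Ioo a b) : 0 < (b - y) * (y - a) :=
  mul_pos (sub_pos.2 hy.2) (sub_pos.2 hy.1)

lemma hasDerivAt_arcsin_comp {u : ℝ → ℝ} {u' s : ℝ} (hu : HasDerivAt u u' y) (hs : 0 < s)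
    (hsq : 1 - u y ^ 2 = s ^ 2) : HasDerivAt (fun y ↦ arcsin (u y)) (u' / s) y := by
  have hlt : |u y| < 1 := (sq_lt_one_iff_abs_lt_one _).1 (by nlinarith)
  obtain ⟨h₁, h₂⟩ := abs_lt.1 hlt
  refine ((hasDerivAt_arcsin h₁.ne' h₂.ne).comp y hu).congr_deriv ?_
  rw [hsq, Real.sqrt_sq hs.le]
  ring

lemma hasDerivAt_arcsin_arcsineDensity (hy : y ∈ Ioo a b) :
    HasDerivAt (fun y ↦ arcsin ((2 * y - a - b) / (b - a)) / π) (arcsineDensity a b y) y := by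
  have hab : 0 < b - a := sub_pos.2 (hy.1.trans hy.2)
  have hw : 0 < √((b - y) * (y - a)) := Real.sqrt_pos.2 (sub_mul_sub_pos hy)
  have hu : HasDerivAt (fun y : ℝ ↦ (2 * y - a - b) / (b - a)) (2 / (b - a)) y := by
    simpa using ((((hasDerivAt_id y).const_mul 2).sub_const a).sub_const b).div_const (b - a)
  have hsq : 1 - ((2 * y - a - b) / (b - a)) ^ 2 =
      (2 * √((b - y) * (y - a)) / (b - a)) ^ 2 := by
    field_simp
    rw [Real.sq_sqrt (sub_mul_sub_pos hy).le]
    ring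
  refine ((hasDerivAt_arcsin_comp hu (by positivity) hsq).div_const π).congr_deriv ?_
  rw [arcsineDensity]
  field_simp

lemma continuous_arcsin_affine (a b : ℝ) :
    Continuous fun y : ℝ ↦ arcsin ((2 * y - a - b) / (b - a)) / π := by
  fun_prop

lemma integrable_arcsineDensity (hab : a ≤ b) : Integrable (arcsineDensity a b) :=
  integrable_of_hasDerivAt_of_nonneg (support_arcsineDensity_subset hab)
    (continuous_arcsin_affine a b).continuousOn (fun _ ↦ hasDerivAt_arcsin_arcsineDensity)
    fun y _ ↦ arcsineDensity_nonneg a b y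

lemma integral_arcsineDensity (hab : a < b) : ∫ y, arcsineDensity a b y = 1 := by
  rw [integral_eq_sub_of_hasDerivAt_of_support_subset hab.le
    (support_arcsineDensity_subset hab.le) (continuous_arcsin_affine a b).continuousOn
    (fun _ ↦ hasDerivAt_arcsin_arcsineDensity) (integrable_arcsineDensity hab.le)]
  have hne : b - a ≠ 0 := (sub_pos.2 hab).ne'
  rw [show 2 * b - a - b = b - a by ring, show 2 * a - a - b = -(b - a) by ring, neg_div,
    div_self hne, arcsin_one, arcsin_neg_one]
  field_simp
  ring

lemma hasDerivAt_arcsin_arcsineDensity_div (ha : 0 < a) (hy : y ∈ Ioo a b) :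
    HasDerivAt (fun y ↦ arcsin (((a + b) * y - 2 * (a * b)) / ((b - a) * y)) / (π * √(a * b)))
      (arcsineDensity a b y / y) y := by
  have hab : 0 < b - a := sub_pos.2 (hy.1.trans hy.2)
  have hy₀ : 0 < y := ha.trans hy.1
  have hb : 0 < b := hy₀.trans hy.2
  have hw : 0 < √((b - y) * (y - a)) := Real.sqrt_pos.2 (sub_mul_sub_pos hy)
  have hu : HasDerivAt (fun y : ℝ ↦ ((a + b) * y - 2 * (a * b)) / ((b - a) * y))
      (2 * √(a * b) ^ 2 / ((b - a) * y ^ 2)) y := by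
    refine ((((hasDerivAt_id' y).const_mul (a + b)).sub_const (2 * (a * b))).fun_div
      ((hasDerivAt_id' y).const_mul (b - a)) (by positivity)).congr_deriv ?_
    rw [Real.sq_sqrt (by positivity)]
    field_simp
    ring
  have hsq : 1 - (((a + b) * y - 2 * (a * b)) / ((b - a) * y)) ^ 2 =
      (2 * √(a * b) * √((b - y) * (y - a)) / ((b - a) * y)) ^ 2 := by
    field_simp
    rw [Real.sq_sqrt (sub_mul_sub_pos hy).le, Real.sq_sqrt (mul_pos ha hb).le]
    ring
  refine ((hasDerivAt_arcsin_comp hu (by positivity) hsq).div_const _).congr_deriv ?_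
  rw [arcsineDensity]
  field_simp

lemma continuousOn_arcsin_moebius (ha : 0 < a) (hab : a < b) :
    ContinuousOn (fun y : ℝ ↦
      arcsin (((a + b) * y - 2 * (a * b)) / ((b - a) * y)) / (π * √(a * b))) (Icc a b) := by
  refine (continuous_arcsin.comp_continuousOn (ContinuousOn.div (by fun_prop) (by fun_prop)
    fun y hy ↦ ?_)).div_const _
  exact mul_ne_zero (sub_pos.2 hab).ne' (ha.trans_le hy.1).ne'

lemma integrable_arcsineDensity_div (ha : 0 < a) (hab : a < b) :
    Integrable fun y ↦ arcsineDensity a b y / y :=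
  integrable_of_hasDerivAt_of_nonneg (support_arcsineDensity_div_subset hab.le fun y ↦ y)
    (continuousOn_arcsin_moebius ha hab) (fun _ ↦ hasDerivAt_arcsin_arcsineDensity_div ha)
    fun y hy ↦ div_nonneg (arcsineDensity_nonneg a b y) (ha.trans hy.1).le

lemma integral_arcsineDensity_div (ha : 0 < a) (hab : a < b) :
    ∫ y, arcsineDensity a b y / y = 1 / √(a * b) := by
  rw [integral_eq_sub_of_hasDerivAt_of_support_subset hab.le
    (support_arcsineDensity_div_subset hab.le fun y ↦ y) (continuousOn_arcsin_moebius ha hab)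
    (fun _ ↦ hasDerivAt_arcsin_arcsineDensity_div ha) (integrable_arcsineDensity_div ha hab)]
  have hb : 0 < b := ha.trans hab
  have hne : b - a ≠ 0 := (sub_pos.2 hab).ne'
  rw [show (a + b) * b - 2 * (a * b) = (b - a) * b by ring,
    show (a + b) * a - 2 * (a * b) = -((b - a) * a) by ring, neg_div,
    div_self (mul_ne_zero hne hb.ne'), div_self (mul_ne_zero hne ha.ne'), arcsin_one,
    arcsin_neg_one]
  field_simp
  ring

lemma integrable_mul_arcsineDensity_div (ha : 0 ≤ a) (hab : a < b) :
    Integrable fun y ↦ a * b * (arcsineDensity a b y / y) := by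
  rcases ha.eq_or_lt with rfl | ha
  · simp
  · exact (integrable_arcsineDensity_div ha hab).const_mul _

lemma integral_mul_arcsineDensity_div (ha : 0 ≤ a) (hab : a < b) :
    ∫ y, a * b * (arcsineDensity a b y / y) = √(a * b) := by
  rcases ha.eq_or_lt with rfl | ha
  · simp
  · rw [integral_const_mul, integral_arcsineDensity_div ha hab, mul_one_div, Real.div_sqrt]

/-- The sum `S y = √((x - a) * (b - y)) + √((b - x) * (y - a))`, introduced because
`2 * log (S y) - log (x - y)` is a primitive of
`√((b - x) * (x - a)) / (√((b - y) * (y - a)) * (x - y))` and `S` is continuous and positive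
across `y = x`. -/
noncomputable def crossSqrtSum (a b x y : ℝ) : ℝ := √((x - a) * (b - y)) + √((b - x) * (y - a))

lemma continuous_crossSqrtSum (a b x : ℝ) : Continuous (crossSqrtSum a b x) := by
  unfold crossSqrtSum
  fun_prop

lemma crossSqrtSum_pos (hx : x ∈ Ioo a b) (hy : y ∈ Icc a b) : 0 < crossSqrtSum a b x y := by
  have hxa : 0 < x - a := sub_pos.2 hx.1
  have hxb : 0 < b - x := sub_pos.2 hx.2
  rcases hy.2.lt_or_eq with hyb | rfl
  · exact add_pos_of_pos_of_nonneg (Real.sqrt_pos.2 (mul_pos hxa (sub_pos.2 hyb)))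
      (Real.sqrt_nonneg _)
  · exact add_pos_of_nonneg_of_pos (Real.sqrt_nonneg _)
      (Real.sqrt_pos.2 (mul_pos hxb (sub_pos.2 (hx.1.trans hx.2))))

lemma hasDerivAt_crossSqrtSum (hx : x ∈ Ioo a b) (hy : y ∈ Ioo a b) :
    HasDerivAt (crossSqrtSum a b x)
      (-(x - a) / (2 * √((x - a) * (b - y))) + (b - x) / (2 * √((b - x) * (y - a)))) y := by
  have hs : (x - a) * (b - y) ≠ 0 := (mul_pos (sub_pos.2 hx.1) (sub_pos.2 hy.2)).ne'
  have ht : (b - x) * (y - a) ≠ 0 := (mul_pos (sub_pos.2 hx.2) (sub_pos.2 hy.1)).ne'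
  have hs' := (((hasDerivAt_id' y).const_sub b).const_mul (x - a)).sqrt hs
  have ht' := (((hasDerivAt_id' y).sub_const a).const_mul (b - x)).sqrt ht
  exact (hs'.fun_add ht').congr_deriv (by ring)

lemma sqrt_div_sqrt_eq_div_mul_sqrt (hx : x ∈ Ioo a b) (hy : y ∈ Ioo a b) :
    √((b - x) * (x - a)) / √((b - y) * (y - a)) =
      (b - x) * (x - a) / (√((x - a) * (b - y)) * √((b - x) * (y - a))) := by
  have hxq := sub_mul_sub_pos hx
  have hyq := sub_mul_sub_pos hy
  have hprod : √((x - a) * (b - y)) * √((b - x) * (y - a)) =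
      √((b - x) * (x - a)) * √((b - y) * (y - a)) := by
    rw [← Real.sqrt_mul (mul_pos (sub_pos.2 hx.1) (sub_pos.2 hy.2)).le, ← Real.sqrt_mul hxq.le]
    ring_nf
  rw [hprod]
  field_simp
  exact Real.sq_sqrt hxq.le

lemma hasDerivAt_log_crossSqrtSum (hx : x ∈ Ioo a b) (hy : y ∈ Ioo a b) (hxy : x ≠ y) :
    HasDerivAt (fun y ↦ 2 * log (crossSqrtSum a b x y) - log (x - y))
      (π * √((b - x) * (x - a)) * (arcsineDensity a b y / (x - y))) y := by
  have hS := crossSqrtSum_pos hx (Ioo_subset_Icc_self hy)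
  have hxy' : x - y ≠ 0 := sub_ne_zero.2 hxy
  refine ((((hasDerivAt_crossSqrtSum hx hy).log hS.ne').const_mul 2).sub
    (((hasDerivAt_id' y).const_sub x).log hxy')).congr_deriv ?_
  have hweight : π * √((b - x) * (x - a)) * (arcsineDensity a b y / (x - y)) =
      √((b - x) * (x - a)) / √((b - y) * (y - a)) / (x - y) := by
    rw [arcsineDensity]
    field_simp
  rw [hweight, sqrt_div_sqrt_eq_div_mul_sqrt hx hy]
  have hs : 0 < (x - a) * (b - y) := mul_pos (sub_pos.2 hx.1) (sub_pos.2 hy.2)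
  have ht : 0 < (b - x) * (y - a) := mul_pos (sub_pos.2 hx.2) (sub_pos.2 hy.1)
  have hs_sq := Real.sq_sqrt hs.le
  have ht_sq := Real.sq_sqrt ht.le
  have hs_pos := Real.sqrt_pos.2 hs
  have ht_pos := Real.sqrt_pos.2 ht
  unfold crossSqrtSum
  generalize √((x - a) * (b - y)) = s at *
  generalize √((b - x) * (y - a)) = t at *
  have hst : s + t ≠ 0 := (add_pos hs_pos ht_pos).ne'
  field_simp
  linear_combination t * hs_sq + s * ht_sq

lemma integral_arcsineDensity_div_sub {p q : ℝ} (hx : x ∈ Ioo a b) (hpq : p ≤ q)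
    (hap : a ≤ p) (hqb : q ≤ b) (hxpq : x ∉ Icc p q) :
    π * √((b - x) * (x - a)) * ∫ y in p..q, arcsineDensity a b y / (x - y) =
      (2 * log (crossSqrtSum a b x q) - log (x - q)) -
        (2 * log (crossSqrtSum a b x p) - log (x - p)) := by
  have hne : ∀ y ∈ Icc p q, x - y ≠ 0 := fun y hy h ↦ hxpq (sub_eq_zero.1 h ▸ hy)
  have hcont : ContinuousOn (fun y ↦ 2 * log (crossSqrtSum a b x y) - log (x - y)) (Icc p q) :=
    (((continuous_crossSqrtSum a b x).continuousOn.log fun y hy ↦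
      (crossSqrtSum_pos hx (Icc_subset_Icc hap hqb hy)).ne').const_mul 2).sub
      (ContinuousOn.log (by fun_prop) hne)
  have hint : IntervalIntegrable (fun y ↦ arcsineDensity a b y / (x - y)) volume p q :=
    (integrable_arcsineDensity (hx.1.trans hx.2).le).intervalIntegrable.mul_continuousOn <|
      ContinuousOn.inv₀ (by fun_prop) (by rwa [uIcc_of_le hpq])
  rw [← intervalIntegral.integral_const_mul]
  refine intervalIntegral.integral_eq_sub_of_hasDerivAt_of_le hpq hcont (fun y hy ↦ ?_)
    (hint.const_mul _)
  exact hasDerivAt_log_crossSqrtSum hx (Ioo_subset_Ioo hap hqb hy)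
    (sub_ne_zero.1 (hne y (Ioo_subset_Icc_self hy)))

lemma two_mul_log_crossSqrtSum_left (hx : x ∈ Ioo a b) :
    2 * log (crossSqrtSum a b x a) - log (x - a) = log (b - a) := by
  have hxa : 0 < x - a := sub_pos.2 hx.1
  have hab : 0 < b - a := sub_pos.2 (hx.1.trans hx.2)
  rw [crossSqrtSum, sub_self, mul_zero, Real.sqrt_zero, add_zero, Real.log_sqrt (by positivity),
    Real.log_mul hxa.ne' hab.ne']
  ring

lemma two_mul_log_crossSqrtSum_right (hx : x ∈ Ioo a b) :
    2 * log (crossSqrtSum a b x b) - log (x - b) = log (b - a) := by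
  have hxb : 0 < b - x := sub_pos.2 hx.2
  have hab : 0 < b - a := sub_pos.2 (hx.1.trans hx.2)
  rw [crossSqrtSum, sub_self, mul_zero, Real.sqrt_zero, zero_add, Real.log_sqrt (by positivity),
    Real.log_mul hxb.ne' hab.ne', ← neg_sub b x, Real.log_neg_eq_log]
  ring

lemma setIntegral_arcsineDensity_div_sub {ε : ℝ} (hε : 0 < ε) (ha : a < x - ε) (hb : x + ε < b) :
    π * √((b - x) * (x - a)) * ∫ y in {y | ε < |x - y|}, arcsineDensity a b y / (x - y) =
      2 * (log (crossSqrtSum a b x (x - ε)) - log (crossSqrtSum a b x (x + ε))) := by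
  have hx : x ∈ Ioo a b := ⟨by linarith, by linarith⟩
  have hab : a ≤ b := (hx.1.trans hx.2).le
  have hleft := integral_arcsineDensity_div_sub hx ha.le le_rfl (by linarith)
    fun h ↦ by linarith [h.2]
  have hright := integral_arcsineDensity_div_sub hx hb.le (by linarith) le_rfl
    fun h ↦ by linarith [h.1]
  rw [two_mul_log_crossSqrtSum_left hx, sub_sub_cancel] at hleft
  rw [two_mul_log_crossSqrtSum_right hx, sub_add_cancel_left, Real.log_neg_eq_log] at hright
  rw [setIntegral_lt_abs_sub_of_support_subset (support_arcsineDensity_div_subset hab _) hε ha.le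
    hb.le (integrableOn_div_sub_of_lt_abs (integrable_arcsineDensity hab) x hε), mul_add, hleft,
    hright]
  ring

lemma hasHilbertTransform_arcsineDensity (hx : x ∈ Ioo a b) :
    HasHilbertTransform (arcsineDensity a b) x 0 := by
  have hw : 0 < √((b - x) * (x - a)) := Real.sqrt_pos.2 (sub_mul_sub_pos hx)
  have hlog : ContinuousAt (fun y ↦ log (crossSqrtSum a b x y)) x :=
    (continuous_crossSqrtSum a b x).continuousAt.log
      (crossSqrtSum_pos hx (Ioo_subset_Icc_self hx)).ne'
  have hlim : Tendsto (fun ε ↦ 1 / π * (2 * (log (crossSqrtSum a b x (x - ε)) -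
      log (crossSqrtSum a b x (x + ε))) / (π * √((b - x) * (x - a))))) (𝓝 0) (𝓝 0) := by
    have hsub : Tendsto (fun ε : ℝ ↦ x - ε) (𝓝 0) (𝓝 x) :=
      Continuous.tendsto' (by fun_prop) _ _ (by simp)
    have hadd : Tendsto (fun ε : ℝ ↦ x + ε) (𝓝 0) (𝓝 x) :=
      Continuous.tendsto' (by fun_prop) _ _ (by simp)
    simpa using ((((hlog.tendsto.comp hsub).sub (hlog.tendsto.comp hadd)).const_mul 2).div_const
      (π * √((b - x) * (x - a)))).const_mul (1 / π)
  refine (hlim.mono_left nhdsWithin_le_nhds).congr' ?_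
  filter_upwards [Ioo_mem_nhdsGT (lt_min (sub_pos.2 hx.1) (sub_pos.2 hx.2))] with ε hε
  obtain ⟨hεa, hεb⟩ := lt_min_iff.1 hε.2
  rw [← setIntegral_arcsineDensity_div_sub hε.1 (lt_sub_comm.1 hεa) (lt_sub_iff_add_lt'.1 hεb),
    mul_div_cancel_left₀ _ (by positivity)]

end Arcsine

section MarchenkoPastur

variable {a b x : ℝ}

lemma indicator_sqrt_div_eq (ha : 0 ≤ a) (hab : a ≤ b) (hx : x ≠ 0) (y : ℝ) :
    indicator (Ioo a b) (fun z ↦ √((b - z) * (z - a)) / (2 * π * z)) y =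
      (b - x) * (x - a) / (2 * x) * arcsineDensity a b y +
        (x - y) * (1 / 2 * arcsineDensity a b y -
          1 / (2 * x) * (a * b * (arcsineDensity a b y / y))) := by
  by_cases hmem : y ∈ Ioo a b
  · have hw : 0 < √((b - y) * (y - a)) := Real.sqrt_pos.2 (sub_mul_sub_pos hmem)
    have hy : y ≠ 0 := (ha.trans_lt hmem.1).ne'
    rw [indicator_of_mem hmem, arcsineDensity]
    field_simp
    rw [Real.sq_sqrt (sub_mul_sub_pos hmem).le]
    ring
  · rw [indicator_of_notMem hmem,
      Function.notMem_support.1 (notMem_subset (support_arcsineDensity_subset hab) hmem)]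
    simp only [mul_zero, zero_div, sub_zero, add_zero]

theorem hilbert_transform_marchenko_pastur_general (ha : 0 ≤ a) (hx : x ∈ Ioo a b) :
    HasHilbertTransform
      (indicator (Ioo a b) fun y ↦ √((b - y) * (y - a)) / (2 * π * y)) x
      ((x - √(a * b)) / (2 * π * x)) := by
  have hab : a < b := hx.1.trans hx.2
  have hx₀ : 0 < x := ha.trans_lt hx.1
  have hα := integrable_arcsineDensity hab.le
  have hα_div := integrable_mul_arcsineDensity_div ha hab
  have hr : Integrable fun y ↦ 1 / 2 * arcsineDensity a b y -
      1 / (2 * x) * (a * b * (arcsineDensity a b y / y)) :=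
    (hα.const_mul _).sub (hα_div.const_mul _)
  have hr_integral : ∫ y, (1 / 2 * arcsineDensity a b y -
      1 / (2 * x) * (a * b * (arcsineDensity a b y / y))) = 1 / 2 - 1 / (2 * x) * √(a * b) := by
    rw [integral_sub (hα.const_mul _) (hα_div.const_mul _), integral_const_mul,
      integral_const_mul, integral_arcsineDensity hab, integral_mul_arcsineDensity_div ha hab,
      mul_one]
  rw [funext (indicator_sqrt_div_eq ha hab.le hx₀.ne')]
  convert ((hasHilbertTransform_arcsineDensity hx).const_mul
    ((b - x) * (x - a) / (2 * x))).add_sub_mul (hα.const_mul _) hr using 1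
  rw [hr_integral]
  field_simp
  ring

lemma mpXm_nonneg (c : ℝ) : 0 ≤ mpXm c := sq_nonneg _

lemma sqrt_mpXm_mul_mpXp {c : ℝ} (hc : -1 ≤ c) : √(mpXm c * mpXp c) = |c| := by
  have hsq : √(c + 1) ^ 2 = c + 1 := Real.sq_sqrt (by linarith)
  have hprod : mpXm c * mpXp c = c ^ 2 := by
    rw [mpXm, mpXp, ← mul_pow]
    congr 1
    linear_combination hsq
  rw [hprod, Real.sqrt_sq_eq_abs]

end MarchenkoPastur

/-- For every `c ≥ 0` and `x ∈ (x_−, x_+)`, the Hilbert transform of the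
Marchenko–Pastur density satisfies `Hv(c,·)(x) = (x − c)/(2πx)`. -/
theorem hilbert_transform_marchenko_pastur (c : ℝ) (hc : 0 ≤ c)
    (x : ℝ) (hx : x ∈ Set.Ioo (mpXm c) (mpXp c)) :
    HasHilbertTransform (mpDensity c) x ((x - c) / (2 * π * x)) := by
  have hH := hilbert_transform_marchenko_pastur_general (mpXm_nonneg c) hx
  rwa [sqrt_mpXm_mul_mpXp (by linarith), abs_of_nonneg hc] at hH
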